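/- arXiv:2106.08994 — 9 statements merged into one kernel-verified Lean document; each statement's English description precedes it below -/
import Mathlib

section
/- The set D = {I(n) : n a positive integer, n ≥ 2} of abundancy indices is dense in the real interval (1, ∞). -/
/-!
If `s` is a finite set of primes, then `I (∏ p ∈ s, p) = ∏ p ∈ s, (1 + 1 / p)`. Given `x > 1` and
`ε > 0`, choose `K` with `x / K < ε` and multiply together the primes `p ≥ K` one after the other.
Since `∑ 1 / p` over the primes diverges, the resulting abundancy indices, which start at `1`,
eventually exceed `x`; the step at which they first do so multiplies a number `≤ x` by some
`1 + 1 / p` with `p ≥ K`, so that it lands in `(x, x + ε)`.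
-/

/-- Sum of the positive divisors of `n`. -/
def sigma (n : ℕ) : ℕ := ∑ d ∈ n.divisors, d

/-- The abundancy index `I(n) = σ(n)/n` as a rational number. -/
def I (n : ℕ) : ℚ := (sigma n : ℚ) / n

/-- The abundancy index is multiplicative on a product of distinct primes. -/
theorem I_prod_primes (s : Finset ℕ) (hs : ∀ p ∈ s, p.Prime) :
    (I (∏ p ∈ s, p) : ℝ) = ∏ p ∈ s, (1 + 1 / (p : ℝ)) := by
  induction s using Finset.induction_on with
  | empty => simp [I, sigma]
  | insert p s hp ih =>
    have hpp : p.Prime := hs p (Finset.mem_insert_self p s)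
    have hs' : ∀ q ∈ s, q.Prime := fun q hq => hs q (Finset.mem_insert_of_mem hq)
    have hc : p.Coprime (∏ q ∈ s, q) := Nat.Coprime.prod_right fun q hq =>
      (Nat.coprime_primes hpp (hs' q hq)).2 fun h => hp (h ▸ hq)
    have hmul : sigma (p * ∏ q ∈ s, q) = (p + 1) * sigma (∏ q ∈ s, q) := by
      unfold sigma
      rw [hc.sum_divisors_mul, Nat.Prime.sum_divisors hpp]
    rw [Finset.prod_insert hp, Finset.prod_insert hp, ← ih hs']
    have hp0 : (p : ℝ) ≠ 0 := by exact_mod_cast hpp.ne_zero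
    simp only [I, hmul]
    push_cast
    rw [mul_div_mul_comm]
    congr 1
    field_simp

/-- The reciprocal of `p` if `p` is a prime at least `K`, and `0` otherwise. -/
noncomputable def recipPrime (K p : ℕ) : ℝ := if p.Prime ∧ K ≤ p then 1 / (p : ℝ) else 0

theorem recipPrime_nonneg (K p : ℕ) : 0 ≤ recipPrime K p := by
  unfold recipPrime; split_ifs <;> positivity

theorem not_summable_recipPrime (K : ℕ) : ¬ Summable (recipPrime K) := by
  refine fun h => not_summable_one_div_on_primes ((summable_congr_atTop ?_).1 h)
  filter_upwards [Filter.eventually_ge_atTop K] with p hp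
  simp [recipPrime, Set.indicator_apply, hp]

/-- The partial products of `1 + recipPrime K p` are abundancy indices: those of the product of
all primes in `[K, m)`. -/
theorem prod_recipPrime (K m : ℕ) :
    ∏ p ∈ Finset.range m, (1 + recipPrime K p) =
      I (∏ p ∈ Finset.range m with p.Prime ∧ K ≤ p, p) := by
  rw [I_prod_primes _ fun p hp => (Finset.mem_filter.1 hp).2.1, Finset.prod_filter]
  refine Finset.prod_congr rfl fun p _ => ?_
  unfold recipPrime
  split_ifs <;> simp

/-- The partial products are unbounded, since they dominate the partial sums of a divergent
series. -/
theorem exists_lt_prod_recipPrime (K : ℕ) (x : ℝ) :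
    ∃ m, x < ∏ p ∈ Finset.range m, (1 + recipPrime K p) := by
  have h := (not_summable_iff_tendsto_nat_atTop_of_nonneg (recipPrime_nonneg K)).1
    (not_summable_recipPrime K)
  obtain ⟨m, hm⟩ := (h.eventually_gt_atTop x).exists
  refine ⟨m, hm.trans_le ?_⟩
  have key : ∀ m, 1 + ∑ p ∈ Finset.range m, recipPrime K p ≤
      ∏ p ∈ Finset.range m, (1 + recipPrime K p) := by
    intro m
    induction m with
    | zero => simp
    | succ m ih =>
      rw [Finset.sum_range_succ, Finset.prod_range_succ]
      have hm := recipPrime_nonneg K m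
      have hS : 0 ≤ ∑ p ∈ Finset.range m, recipPrime K p :=
        Finset.sum_nonneg fun p _ => recipPrime_nonneg K p
      nlinarith [mul_le_mul_of_nonneg_right ih (by linarith : 0 ≤ 1 + recipPrime K m),
        mul_nonneg hS hm]
  linarith [key m]

theorem recipPrime_le {K : ℕ} (hK : 0 < K) (p : ℕ) : recipPrime K p ≤ 1 / K := by
  unfold recipPrime
  split_ifs with h
  · have := h.2
    gcongr
  · positivity

theorem abundancy_indices_dense :
    Set.Ioi (1 : ℝ) ⊆ closure {x : ℝ | ∃ n : ℕ, 2 ≤ n ∧ (I n : ℝ) = x} := by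
  intro x hx
  rw [Set.mem_Ioi] at hx
  rw [Metric.mem_closure_iff]
  intro ε hε
  obtain ⟨K, hK⟩ := exists_nat_gt (x / ε)
  have hK0 : (0 : ℝ) < K := lt_trans (by positivity) hK
  classical
  have hex := exists_lt_prod_recipPrime K x
  obtain ⟨k, hk⟩ : ∃ k, Nat.find hex = k + 1 := by
    refine Nat.exists_eq_succ_of_ne_zero fun h0 => ?_
    have := Nat.find_spec hex
    rw [h0] at this
    simp at this
    linarith
  -- At stage `k + 1` the product first exceeds `x`.
  have hlt := Nat.find_spec hex
  have hle := not_lt.1 (Nat.find_min hex (m := k) (by omega))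
  rw [hk] at hlt
  have hup : ∏ p ∈ Finset.range (k + 1), (1 + recipPrime K p) < x + ε := by
    rw [Finset.prod_range_succ]
    have h1 := recipPrime_le (by exact_mod_cast hK0 : 0 < K) k
    have h2 := recipPrime_nonneg K k
    have h3 : x * (1 / K) < ε := by
      rw [mul_one_div, div_lt_iff₀ hK0, mul_comm]
      exact (div_lt_iff₀ hε).1 hK
    have h4 : x * recipPrime K k ≤ x * (1 / K) := by gcongr
    have h5 := mul_le_mul_of_nonneg_right hle (by linarith : 0 ≤ 1 + recipPrime K k)
    linarith
  rw [prod_recipPrime] at hlt hup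
  refine ⟨_, ⟨∏ p ∈ Finset.range (k + 1) with p.Prime ∧ K ≤ p, p, ?_, rfl⟩, ?_⟩
  · generalize (∏ p ∈ Finset.range (k + 1) with p.Prime ∧ K ≤ p, p) = n at hlt
    by_contra! hn
    -- `I 0 = 0` (division by zero) and `I 1 = 1` do not exceed `x`.
    interval_cases n <;> simp [I, sigma] at hlt <;> linarith
  · rw [Real.dist_eq, abs_lt]
    constructor <;> linarith
end

section
/- If k and m are positive integers with gcd(k, m) = 1 and m < k < σ(m), then the rational number k/m is an abundancy outlaw; consequently, if r/s (with gcd(r, s) = 1) is the abundancy index of some positive integer, then r ≥ σ(s). -/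
/-- A rational number `q > 1` is an abundancy outlaw if `I(n) = q` has no solution
among the positive integers. -/
def AbundancyOutlaw (q : ℚ) : Prop := 1 < q ∧ ¬ ∃ n : ℕ, 0 < n ∧ I n = q

theorem mul_sigma_le (s t : ℕ) (hs : 0 < s) (ht : 0 < t) : t * sigma s ≤ sigma (s * t) := by
  unfold sigma
  rw [Finset.mul_sum,
    ← Finset.sum_image (s := s.divisors) (g := fun d => t * d) (f := fun x => x)
      (fun a _ b _ h => Nat.eq_of_mul_eq_mul_left ht h)]
  refine Finset.sum_le_sum_of_subset fun x hx => ?_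
  obtain ⟨d, hd, rfl⟩ := Finset.mem_image.mp hx
  rw [Nat.mem_divisors, mul_comm s t]
  exact ⟨Nat.mul_dvd_mul_left t (Nat.dvd_of_mem_divisors hd), (Nat.mul_pos ht hs).ne'⟩

theorem sigma_le_of_I_eq (r s n : ℕ) (hs : 0 < s) (hcop : Nat.Coprime r s) (hn : 0 < n)
    (h : I n = (r : ℚ) / s) : sigma s ≤ r := by
  have hmul : sigma n * s = r * n := by
    unfold I at h
    rw [div_eq_div_iff (by positivity) (by positivity)] at h
    exact_mod_cast h
  obtain ⟨t, rfl⟩ : s ∣ n := hcop.symm.dvd_of_dvd_mul_left (hmul ▸ Dvd.intro_left _ rfl)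
  have ht : 0 < t := Nat.pos_of_mul_pos_left hn
  have hle := mul_sigma_le s t hs ht
  have hst : sigma (s * t) = r * t := by
    apply Nat.eq_of_mul_eq_mul_right hs
    rw [hmul]
    ring
  rw [hst, mul_comm r t] at hle
  exact Nat.le_of_mul_le_mul_left hle ht

theorem weiner_outlaw (k m : ℕ) (hk : 0 < k) (hm : 0 < m)
    (hcop : Nat.Coprime k m) (h1 : m < k) (h2 : k < sigma m) :
    AbundancyOutlaw ((k : ℚ) / m) ∧
      ∀ r s : ℕ, 0 < s → Nat.Coprime r s →
        (∃ n : ℕ, 0 < n ∧ I n = (r : ℚ) / s) → sigma s ≤ r := by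
  refine ⟨⟨?_, ?_⟩, ?_⟩
  · rw [one_lt_div (by exact_mod_cast hm)]
    exact_mod_cast h1
  · rintro ⟨n, hn, h⟩
    exact absurd (sigma_le_of_I_eq k m n hm hcop hn h) (by omega)
  · rintro r s hs hrs ⟨n, hn, h⟩
    exact sigma_le_of_I_eq r s n hs hrs hn h
end

section
/- For a positive integer k ≥ 2, the rational number (k + 1)/k is the abundancy index of some positive integer if and only if k is prime. -/
theorem succ_div_self_abundancy_iff_prime (k : ℕ) (hk : 2 ≤ k) :
    (∃ n : ℕ, 0 < n ∧ I n = ((k : ℚ) + 1) / k) ↔ k.Prime := by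
  have hk0 : (k : ℚ) ≠ 0 := by positivity
  constructor
  · rintro ⟨n, hn, h⟩
    have hn0 : (n : ℚ) ≠ 0 := by positivity
    rw [I, sigma, Nat.sum_divisors_eq_sum_properDivisors_add_self, div_eq_div_iff hn0 hk0] at h
    norm_cast at h
    have hs : n = (∑ d ∈ n.properDivisors, d) * k := by linarith
    rcases Nat.sum_properDivisors_dvd (Dvd.intro k hs.symm) with h1 | h1
    · rw [h1, one_mul] at hs
      subst hs
      exact Nat.sum_properDivisors_eq_one_iff_prime.mp h1
    · rw [h1] at hs
      nlinarith
  · intro hp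
    refine ⟨k, hp.pos, ?_⟩
    rw [I, sigma, Nat.sum_divisors_eq_sum_properDivisors_add_self,
      Nat.sum_properDivisors_eq_one_iff_prime.mpr hp]
    push_cast
    rw [add_comm]
end

section
/- If k is an odd composite positive integer, then the rational number (k + 2)/k is an abundancy outlaw. -/
/-!
If `I n = (k + 2) / k` with `k` odd, then `k σ(n) = (k + 2) n` and `k` is coprime to `k + 2`, so
`k ∣ n`. Abundancy is monotone under divisibility (`mul_sigma_le_sigma_mul`), hence
`σ(k) ≤ k + 2`. But an odd composite `k` has, besides `1` and `k`, a proper divisor that is at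
least `3`, so `σ(k) > k + 2` (`add_two_lt_sigma`).
-/

/-- Monotonicity of the abundancy index under divisibility, `I k ≤ I (m * k)`, with denominators
cleared: multiplication by `m` injects the divisors of `k` into those of `m * k`. -/
lemma mul_sigma_le_sigma_mul {m k : ℕ} (hm : 0 < m) (hk : 0 < k) :
    m * sigma k ≤ sigma (m * k) := by
  unfold sigma
  rw [Finset.mul_sum,
    ← Finset.sum_image (f := fun d => d) (g := fun d => m * d)
      (fun a _ b _ h => Nat.eq_of_mul_eq_mul_left hm h)]
  apply Finset.sum_le_sum_of_subset
  intro x hx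
  obtain ⟨d, hd, rfl⟩ := Finset.mem_image.mp hx
  rw [Nat.mem_divisors] at hd ⊢
  exact ⟨Nat.mul_dvd_mul_left m hd.1, (Nat.mul_pos hm hk).ne'⟩

lemma add_two_lt_sigma {k : ℕ} (hodd : Odd k) (hk : 1 < k) (hcomp : ¬ k.Prime) :
    k + 2 < sigma k := by
  have hdvd : k.minFac ∣ k := k.minFac_dvd
  have hp : k.minFac.Prime := Nat.minFac_prime (by omega)
  have hlt : k.minFac < k := (Nat.not_prime_iff_minFac_lt hk).mp hcomp
  have hne : k.minFac ≠ 2 := fun h => by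
    rw [h] at hdvd
    exact (Nat.not_even_iff_odd.mpr hodd) (even_iff_two_dvd.mpr hdvd)
  have h2 := hp.two_le
  have hsub : ({1, k.minFac, k} : Finset ℕ) ⊆ k.divisors := by
    intro x hx
    simp only [Finset.mem_insert, Finset.mem_singleton] at hx
    rw [Nat.mem_divisors]
    refine ⟨?_, by omega⟩
    rcases hx with rfl | rfl | rfl
    · exact one_dvd _
    · exact hdvd
    · exact dvd_rfl
  have hsum : ∑ d ∈ ({1, k.minFac, k} : Finset ℕ), d = 1 + (k.minFac + k) := by
    rw [Finset.sum_insert, Finset.sum_pair hlt.ne]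
    simp only [Finset.mem_insert, Finset.mem_singleton]
    omega
  have hle : ∑ d ∈ ({1, k.minFac, k} : Finset ℕ), d ≤ sigma k :=
    Finset.sum_le_sum_of_subset hsub
  omega

theorem odd_composite_outlaw (k : ℕ) (hodd : Odd k) (hk : 1 < k)
    (hcomp : ¬ k.Prime) : AbundancyOutlaw (((k : ℚ) + 2) / k) := by
  have hkQ : (0 : ℚ) < k := by exact_mod_cast (by omega : 0 < k)
  refine ⟨by rw [lt_div_iff₀ hkQ]; linarith, ?_⟩
  rintro ⟨n, hn, h⟩
  have hnQ : (n : ℚ) ≠ 0 := by exact_mod_cast hn.ne'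
  unfold I at h
  rw [div_eq_div_iff hnQ hkQ.ne'] at h
  have hN : sigma n * k = (k + 2) * n := by exact_mod_cast h
  have hcop : Nat.Coprime k (k + 2) := by
    rw [Nat.coprime_self_add_right]
    exact Nat.coprime_two_right.mpr hodd
  obtain ⟨m, rfl⟩ : k ∣ n := hcop.dvd_of_dvd_mul_left (hN ▸ Dvd.intro_left _ rfl)
  have hm : 0 < m := Nat.pos_of_mul_pos_left hn
  have hs : sigma (m * k) = m * (k + 2) := by
    rw [mul_comm k m] at hN
    apply Nat.eq_of_mul_eq_mul_right (by omega : 0 < k)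
    rw [hN]
    ring
  have hle := mul_sigma_le_sigma_mul hm (by omega : 0 < k)
  rw [hs] at hle
  exact absurd (Nat.le_of_mul_le_mul_left hle hm) (add_two_lt_sigma hodd hk hcomp).not_ge
end

section
/- The set of abundancy outlaws is dense in the real interval (1, ∞). -/
/-- Pairing `d` with `n / d`. At `n = 0` both sides are `0`, by the convention `0 / 0 = 0`. -/
lemma I_eq_sum (n : ℕ) : I n = ∑ d ∈ n.divisors, (1 / d : ℚ) := by
  rcases Nat.eq_zero_or_pos n with rfl | hn
  · simp [I]
  · unfold I sigma
    rw [← Nat.sum_div_divisors n (fun d => (1 / d : ℚ)), Nat.cast_sum, Finset.sum_div]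
    refine Finset.sum_congr rfl fun d hd => ?_
    have hdn := Nat.dvd_of_mem_divisors hd
    have hd0 : (d : ℚ) ≠ 0 := by exact_mod_cast (Nat.pos_of_dvd_of_pos hdn hn).ne'
    rw [Nat.cast_div hdn hd0, one_div_div]

lemma I_mono {m n : ℕ} (h : m ∣ n) (hn : 0 < n) : I m ≤ I n := by
  rw [I_eq_sum, I_eq_sum]
  exact Finset.sum_le_sum_of_subset_of_nonneg (Nat.divisors_subset_of_dvd hn.ne' h)
    fun _ _ _ => by positivity

lemma exists_lt_I (x : ℝ) : ∃ N : ℕ, 0 < N ∧ x < (I N : ℝ) := by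
  obtain ⟨n, hn⟩ :=
    (Real.tendsto_sum_range_one_div_nat_succ_atTop.eventually_gt_atTop x).exists
  refine ⟨n.factorial, n.factorial_pos, hn.trans_le ?_⟩
  rw [I_eq_sum]
  push_cast
  have hsub : (Finset.range n).image (· + 1) ⊆ n.factorial.divisors := by
    intro d hd
    obtain ⟨i, hi, rfl⟩ := Finset.mem_image.mp hd
    exact Nat.mem_divisors.mpr ⟨Nat.dvd_factorial i.succ_pos (Finset.mem_range.mp hi),
      n.factorial_ne_zero⟩
  refine le_trans (le_of_eq ?_)
    (Finset.sum_le_sum_of_subset_of_nonneg hsub fun _ _ _ => by positivity)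
  rw [Finset.sum_image (fun a _ b _ h => Nat.succ_injective h)]
  push_cast
  rfl

/-- A reduced fraction `k / m` below `I m` is an outlaw: a solution `n` of `I n = k / m` would be
a multiple of `m`, and would thus satisfy `I n ≥ I m`. -/
lemma outlaw_of_lt {k m : ℕ} (hm : 0 < m) (hkm : Nat.Coprime k m) (h1 : 1 < (k / m : ℚ))
    (h2 : (k / m : ℚ) < I m) : AbundancyOutlaw (k / m : ℚ) := by
  refine ⟨h1, ?_⟩
  rintro ⟨n, hn, hI⟩
  have hm' : (m : ℚ) ≠ 0 := by exact_mod_cast hm.ne'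
  have hn' : (n : ℚ) ≠ 0 := by exact_mod_cast hn.ne'
  have hmul : sigma n * m = k * n := by
    have h := hI
    rw [I, div_eq_div_iff hn' hm'] at h
    exact_mod_cast h
  have hdvd : m ∣ n := hkm.symm.dvd_of_dvd_mul_left (hmul ▸ Dvd.intro_left _ rfl)
  exact absurd (I_mono hdvd hn) (not_le.mpr (hI ▸ h2))

theorem outlaws_dense :
    Set.Ioi (1 : ℝ) ⊆ closure {x : ℝ | ∃ q : ℚ, AbundancyOutlaw q ∧ (q : ℝ) = x} := by
  intro x hx
  have hx1 : 1 < x := hx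
  rw [Metric.mem_closure_iff]
  intro ε hε
  obtain ⟨N, hN, hNI⟩ := exists_lt_I (x + 2)
  have hN2 : 2 ≤ N := by
    rcases Nat.lt_or_ge N 2 with h | h
    · obtain rfl : N = 1 := by omega
      norm_num [I, sigma] at hNI
      linarith
    · exact h
  have hNr : (2 : ℝ) ≤ N := by exact_mod_cast hN2
  obtain ⟨j, hj⟩ := pow_unbounded_of_one_lt (max 1 (2 / ε)) (by linarith : (1 : ℝ) < N)
  obtain ⟨hj1, hj2⟩ := max_lt_iff.mp hj
  -- With `t = ⌈x * M⌉`, the fraction `(N * t + 1) / N ^ (j + 1) = (t + 1 / N) / M` exceeds `x` by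
  -- less than `2 / M`, which is smaller than both `ε` and `2`.
  set M : ℝ := (N : ℝ) ^ j with hM
  have hM0 : 0 < M := by linarith
  set t : ℕ := ⌈x * M⌉₊ with ht
  have ht1 : x * M ≤ t := Nat.le_ceil _
  have ht2 : (t : ℝ) < x * M + 1 := Nat.ceil_lt_add_one (by positivity)
  have hq : (((N * t + 1 : ℕ) / (N ^ (j + 1) : ℕ) : ℚ) : ℝ) = (t + 1 / N) / M := by
    push_cast
    rw [pow_succ, ← hM]
    field_simp
  have hinv : 1 / (N : ℝ) < 1 := by
    rw [div_lt_one (by linarith)]; linarith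
  have hlow : x < (t + 1 / N) / M := by
    rw [lt_div_iff₀ hM0]
    have : 0 < 1 / (N : ℝ) := by positivity
    linarith
  have hup : (t + 1 / N) / M < x + 2 / M := by
    rw [div_lt_iff₀ hM0, add_mul, div_mul_cancel₀ _ hM0.ne']
    linarith
  have h2M : 2 / M < ε := by
    rw [div_lt_iff₀ hε] at hj2
    rw [div_lt_iff₀ hM0]; linarith
  have h2M' : 2 / M < 2 := by
    rw [div_lt_iff₀ hM0]; linarith
  refine ⟨_, ⟨_, outlaw_of_lt (k := N * t + 1) (m := N ^ (j + 1)) (by positivity) ?_ ?_ ?_, rfl⟩, ?_⟩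
  · exact Nat.Coprime.pow_right _ (by simp)
  · have : (1 : ℝ) < (((N * t + 1 : ℕ) / (N ^ (j + 1) : ℕ) : ℚ) : ℝ) := by rw [hq]; linarith
    exact_mod_cast this
  · have hmono : ((I N : ℚ) : ℝ) ≤ (I (N ^ (j + 1)) : ℚ) := by
      exact_mod_cast I_mono (dvd_pow_self N j.succ_ne_zero) (by positivity)
    have : (((N * t + 1 : ℕ) / (N ^ (j + 1) : ℕ) : ℚ) : ℝ) < (I (N ^ (j + 1)) : ℚ) := by
      rw [hq]; linarith
    exact_mod_cast this
  · rw [hq, Real.dist_eq, abs_lt]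
    constructor <;> linarith
end

section
/- For every prime p > 3, the rational number (σ(2p) + 1)/(2p) is an abundancy outlaw; whereas for p = 2 and p = 3, (σ(2p) + 1)/(2p) is the abundancy index of some positive integer. -/
lemma sigma_two_mul {k : ℕ} (hk : ¬ 2 ∣ k) : sigma (2 * k) = 3 * sigma k := by
  have hc : Nat.Coprime 2 k := (Nat.Prime.coprime_iff_not_dvd Nat.prime_two).2 hk
  have h2 : ∑ d ∈ Nat.divisors 2, d = 3 := by decide
  unfold sigma
  rw [hc.sum_divisors_mul, h2]

/-- The reciprocals of `1, 2, p, 2p` account for all but `1 / (2p)` of the abundancy index, so any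
further divisor `a` of `n` satisfies `1 / a ≤ 1 / (2p)`. -/
lemma two_mul_le_of_dvd {p n a : ℕ} (hp : 3 < p) (hn : 0 < n) (h2p : 2 * p ∣ n)
    (h : 2 * p * sigma n = (3 * p + 4) * n) (ha : a ∣ n)
    (ha1 : a ≠ 1) (ha2 : a ≠ 2) (hap : a ≠ p) (ha2p : a ≠ 2 * p) : 2 * p ≤ a := by
  have hd2 : 2 ∣ n := (Dvd.intro _ rfl).trans h2p
  have hdp : p ∣ n := (Dvd.intro_left _ rfl).trans h2p
  have hsub : ({1, 2, p, 2 * p, a} : Finset ℕ) ⊆ n.divisors := by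
    intro d hd
    simp only [Finset.mem_insert, Finset.mem_singleton] at hd
    rw [Nat.mem_divisors]
    refine ⟨?_, hn.ne'⟩
    rcases hd with rfl | rfl | rfl | rfl | rfl
    exacts [one_dvd _, hd2, hdp, h2p, ha]
  have hle : ∑ d ∈ ({1, 2, p, 2 * p, a} : Finset ℕ), n / d ≤ sigma n := by
    have hs : ∑ d ∈ n.divisors, n / d = sigma n := Nat.sum_div_divisors n (fun d => d)
    rw [← hs]
    exact Finset.sum_le_sum_of_subset hsub
  rw [Finset.sum_insert (by simp; omega), Finset.sum_insert (by simp; omega),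
    Finset.sum_insert (by simp; omega), Finset.sum_insert (by simp; omega),
    Finset.sum_singleton, Nat.div_one] at hle
  have e2 := Nat.mul_div_cancel' hd2
  have ep := Nat.mul_div_cancel' hdp
  have e2p := Nat.mul_div_cancel' h2p
  have ea := Nat.mul_div_cancel' ha
  set x := n / 2
  set y := n / p
  set z := n / (2 * p)
  set w := n / a
  have hmul := Nat.mul_le_mul_left (2 * p) hle
  rw [h] at hmul
  have hw : 2 * p * w ≤ a * w := by nlinarith
  have hw0 : 0 < w := Nat.pos_of_mul_pos_left (ea ▸ hn : 0 < a * w)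
  exact Nat.le_of_mul_le_mul_right hw hw0

lemma no_solution {p n : ℕ} (hp : p.Prime) (hp3 : 3 < p) (hn : 0 < n)
    (h : 2 * p * sigma n = (3 * p + 4) * n) : False := by
  have hodd : p % 2 = 1 := hp.eq_two_or_odd.resolve_left (by omega)
  have hp2 : ¬ p ∣ 2 := fun hd => by have := Nat.le_of_dvd (by norm_num) hd; omega
  have hcp : Nat.Coprime p (3 * p + 4) := by
    rw [hp.coprime_iff_not_dvd, Nat.dvd_add_right (Dvd.intro_left _ rfl)]
    exact fun hd => hp2 (hp.dvd_of_dvd_pow (show p ∣ 2 ^ 2 from hd))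
  have hc2 : Nat.Coprime 2 (3 * p + 4) := by
    rw [Nat.prime_two.coprime_iff_not_dvd]; omega
  have h2p : 2 * p ∣ n := (hc2.mul_left hcp).dvd_of_dvd_mul_left (Dvd.intro _ h)
  have h4 : ¬ 4 ∣ n := fun hd => by
    have := two_mul_le_of_dvd hp3 hn h2p h hd (by omega) (by omega) (by omega) (by omega)
    omega
  have h3 : ¬ 3 ∣ n := fun hd => by
    have := two_mul_le_of_dvd hp3 hn h2p h hd (by omega) (by omega) (by omega) (by omega)
    omega
  obtain ⟨k, rfl⟩ : 2 ∣ n := (Dvd.intro _ rfl).trans h2p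
  rw [sigma_two_mul (by omega)] at h
  have hk : 3 * (p * sigma k) = (3 * p + 4) * k := by linarith
  have hc3 : Nat.Coprime 3 (3 * p + 4) := by
    rw [Nat.prime_three.coprime_iff_not_dvd]; omega
  have : 3 ∣ k := hc3.dvd_of_dvd_mul_left (Dvd.intro _ hk)
  exact h3 (this.mul_left 2)

theorem sigma_two_p_outlaw (p : ℕ) (hp : p.Prime) :
    (3 < p → AbundancyOutlaw (((sigma (2 * p) : ℚ) + 1) / (2 * p))) ∧
      ((p = 2 ∨ p = 3) → ∃ n : ℕ, 0 < n ∧ I n = ((sigma (2 * p) : ℚ) + 1) / (2 * p)) := by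
  constructor
  · intro hp3
    have hodd : p % 2 = 1 := hp.eq_two_or_odd.resolve_left (by omega)
    have hs : sigma (2 * p) = 3 * (p + 1) := by
      rw [sigma_two_mul (by omega), sigma, hp.sum_divisors, add_comm]
    have hp0 : (0 : ℚ) < p := by exact_mod_cast hp.pos
    rw [hs]
    refine ⟨?_, ?_⟩
    · rw [lt_div_iff₀ (by positivity)]
      push_cast
      linarith
    · rintro ⟨n, hn, h⟩
      have hn0 : (0 : ℚ) < n := by exact_mod_cast hn
      rw [I, div_eq_div_iff hn0.ne' (by positivity)] at h
      refine no_solution hp hp3 hn ?_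
      push_cast at h
      have h' : (2 * p * sigma n : ℚ) = (3 * p + 4) * n := by linarith
      exact_mod_cast h'
  · have s4 : sigma (2 * 2) = 7 := by decide
    have s6 : sigma (2 * 3) = 12 := by decide
    have s6' : sigma 6 = 12 := by decide
    have s18 : sigma 18 = 39 := by decide
    rintro (rfl | rfl)
    · exact ⟨6, by norm_num, by rw [I, s4, s6']; norm_num⟩
    · exact ⟨18, by norm_num, by rw [I, s6, s18]; norm_num⟩
end

section
/- For primes p and q with q > 3, q > p, gcd(p, q + 2) = 1 and gcd(q, p + 2) = 1, the rational number (σ(pq) + 1)/(pq) is an abundancy outlaw. -/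
lemma sigma_mul_of_coprime {m n : ℕ} (h : Nat.Coprime m n) :
    sigma (m * n) = sigma m * sigma n :=
  h.sum_divisors_mul

lemma sigma_prime {p : ℕ} (hp : p.Prime) : sigma p = p + 1 := by
  rw [sigma, hp.divisors, Finset.sum_pair hp.one_lt.ne, add_comm]

/-- A divisor `d < pq` of `n` outside `{1, p, q}` pushes the abundancy index of `n` strictly above
`I(pq) + 1/(pq)`: compare `σ(n)` with the sum of the codivisors of `1, p, q, pq, d`. -/
lemma sigma_lower {p q n d : ℕ} (hp : p.Prime) (hq : q.Prime) (hqp : p < q) (hn : 0 < n)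
    (hpq : p * q ∣ n) (hd : d ∣ n) (hd1 : d ≠ 1) (hdp : d ≠ p) (hdq : d ≠ q) (hlt : d < p * q) :
    (p * q + p + q + 2) * n < sigma n * (p * q) := by
  have hp2 := hp.two_le
  have hqlt : q < p * q := by nlinarith
  have hd0 : 0 < d := Nat.pos_of_dvd_of_pos hd hn
  have hsub : ({1, p, q, p * q, d} : Finset ℕ) ⊆ n.divisors := by
    intro e he
    simp only [Finset.mem_insert, Finset.mem_singleton] at he
    rw [Nat.mem_divisors]
    refine ⟨?_, hn.ne'⟩
    rcases he with rfl | rfl | rfl | rfl | rfl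
    · exact one_dvd _
    · exact (dvd_mul_right _ _).trans hpq
    · exact (dvd_mul_left _ _).trans hpq
    · exact hpq
    · exact hd
  have hsum : (sigma n : ℚ) = ∑ e ∈ n.divisors, (n : ℚ) / e := by
    rw [sigma, ← Nat.sum_div_divisors n (fun e => e), Nat.cast_sum]
    refine Finset.sum_congr rfl fun e he => ?_
    rw [Nat.cast_div (Nat.dvd_of_mem_divisors he)]
    exact_mod_cast (Nat.pos_of_mem_divisors he).ne'
  have hle : ∑ e ∈ ({1, p, q, p * q, d} : Finset ℕ), (n : ℚ) / e ≤ sigma n := by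
    rw [hsum]
    exact Finset.sum_le_sum_of_subset_of_nonneg hsub fun _ _ _ => by positivity
  rw [Finset.sum_insert, Finset.sum_insert, Finset.sum_insert, Finset.sum_pair hlt.ne'] at hle
  · have hp0 : (0 : ℚ) < p := by exact_mod_cast hp.pos
    have hq0 : (0 : ℚ) < q := by exact_mod_cast hq.pos
    have hn0 : (0 : ℚ) < n := by exact_mod_cast hn
    have hdQ : (0 : ℚ) < d := by exact_mod_cast hd0
    have hlt' : (n : ℚ) / (p * q) < n / d :=
      div_lt_div_of_pos_left hn0 hdQ (by exact_mod_cast hlt)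
    have key : ((n : ℚ) + n / p + n / q + n / (p * q) + n / (p * q)) < sigma n := by
      push_cast at hle
      rw [div_one] at hle
      linarith
    have hid : (n : ℚ) + n / p + n / q + n / (p * q) + n / (p * q)
        = (p * q + p + q + 2) * n / (p * q) := by
      field_simp
      ring
    rw [hid, div_lt_iff₀ (by positivity)] at key
    exact_mod_cast key
  all_goals
    simp only [Finset.mem_insert, Finset.mem_singleton, not_or]
    omega

theorem sigma_pq_outlaw (p q : ℕ) (hp : p.Prime) (hq : q.Prime)
    (hq3 : 3 < q) (hqp : p < q) (h1 : Nat.gcd p (q + 2) = 1) (h2 : Nat.gcd q (p + 2) = 1) :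
    AbundancyOutlaw (((sigma (p * q) : ℚ) + 1) / (p * q)) := by
  have hp2 := hp.two_le
  have hp0 : (0 : ℚ) < p := by exact_mod_cast hp.pos
  have hq0 : (0 : ℚ) < q := by exact_mod_cast hq.pos
  have hpq : Nat.Coprime p q := (Nat.coprime_primes hp hq).2 hqp.ne
  have hs : sigma (p * q) = (p + 1) * (q + 1) := by
    rw [sigma_mul_of_coprime hpq, sigma_prime hp, sigma_prime hq]
  rw [hs]
  push_cast
  refine ⟨by rw [lt_div_iff₀ (by positivity)]; nlinarith, ?_⟩
  rintro ⟨n, hn, h⟩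
  have hn0 : (n : ℚ) ≠ 0 := by exact_mod_cast hn.ne'
  have heq : sigma n * (p * q) = (p * q + p + q + 2) * n := by
    rw [I, div_eq_div_iff hn0 (by positivity)] at h
    have h' : (sigma n : ℚ) * (p * q) = (p * q + p + q + 2) * n := by rw [h]; ring
    exact_mod_cast h'
  have hcop : Nat.Coprime (p * q) (p * q + p + q + 2) := by
    refine Nat.Coprime.mul_left ?_ ?_
    · have e : p * q + p + q + 2 = (q + 2) + p * (q + 1) := by ring
      rw [e, Nat.coprime_add_mul_left_right]
      exact h1
    · have e : p * q + p + q + 2 = (p + 2) + q * (p + 1) := by ring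
      rw [e, Nat.coprime_add_mul_left_right]
      exact h2
  have hdvd : p * q ∣ n := hcop.dvd_of_dvd_mul_left ⟨sigma n, by rw [← heq, mul_comm]⟩
  have noextra : ∀ d, d ∣ n → d ≠ 1 → d ≠ p → d ≠ q → ¬ d < p * q :=
    fun d hd hd1 hdp hdq hlt =>
      (sigma_lower hp hq hqp hn hdvd hd hd1 hdp hdq hlt).ne' heq
  obtain ⟨k, hk⟩ := hdvd
  have hpk : ¬ p ∣ k := by
    rintro ⟨j, rfl⟩
    refine noextra (p * p) ⟨q * j, by rw [hk]; ring⟩ (by nlinarith) (by nlinarith) ?_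
      (by nlinarith)
    rintro rfl
    exact Nat.not_prime_mul hp.ne_one hp.ne_one hq
  have hcop' : Nat.Coprime p (q * k) := hpq.mul_right ((Nat.Prime.coprime_iff_not_dvd hp).2 hpk)
  have heq2 : (p + 1) * sigma (q * k) = ((p + 1) * (q + 1) + 1) * k := by
    rw [hk, mul_assoc p q k, sigma_mul_of_coprime hcop', sigma_prime hp] at heq
    refine Nat.eq_of_mul_eq_mul_right (Nat.mul_pos hp.pos hq.pos) ?_
    rw [heq]
    ring
  have hk1 : p + 1 ∣ k := by
    have hc : Nat.Coprime (p + 1) ((p + 1) * (q + 1) + 1) := by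
      simp
    exact hc.dvd_of_dvd_mul_left ⟨_, heq2.symm⟩
  refine noextra (p + 1) (hk1.trans ⟨p * q, by rw [hk]; ring⟩) (by omega) (by omega) ?_
    (by nlinarith)
  -- Consecutive primes force `p = 2` by parity, which `3 < q` excludes.
  intro hpq1
  rcases hp.eq_two_or_odd with h | h <;> rcases hq.eq_two_or_odd with h' | h' <;> omega
end

section
/- If N is an even perfect number, then the rational number (σ(2N) + 1)/(2N) is an abundancy outlaw. -/
lemma sigma_mul_of_coprime_s15 {a b : ℕ} (h : a.Coprime b) : sigma (a * b) = sigma a * sigma b :=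
  h.sum_divisors_mul

lemma sigma_two_pow (k : ℕ) : sigma (2 ^ k) + 1 = 2 ^ (k + 1) := by
  unfold sigma
  rw [Nat.sum_divisors_prime_pow Nat.prime_two, Nat.geomSum_eq le_rfl]
  have := Nat.one_le_two_pow (n := k + 1)
  simp
  omega

/-- Euler's theorem on even perfect numbers. -/
lemma euler_even_perfect (N : ℕ) (hN : 0 < N) (heven : Even N) (hperf : sigma N = 2 * N) :
    ∃ k z : ℕ, 0 < k ∧ z.Prime ∧ z + 1 = 2 ^ (k + 1) ∧ N = 2 ^ k * z := by
  obtain ⟨k, m, hm, rfl⟩ := Nat.exists_eq_two_pow_mul_odd hN.ne'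
  have hk : 0 < k := by
    rcases Nat.eq_zero_or_pos k with rfl | h
    · simp only [pow_zero, one_mul] at heven
      exact absurd heven (Nat.not_even_iff_odd.2 hm)
    · exact h
  obtain ⟨z, hz⟩ : ∃ z, z + 1 = 2 ^ (k + 1) := ⟨_, sigma_two_pow k⟩
  have hs : sigma (2 ^ k) = z := by have := sigma_two_pow k; omega
  rw [sigma_mul_of_coprime_s15 ((Nat.coprime_two_left.2 hm).pow_left k), hs] at hperf
  have hperf' : z * sigma m = (z + 1) * m := by rw [hperf, hz]; ring
  have hz3 : 3 ≤ z := by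
    have : 2 ^ 2 ≤ 2 ^ (k + 1) := Nat.pow_le_pow_right (by norm_num) (by omega)
    omega
  have hdvd : z ∣ m :=
    Nat.Coprime.dvd_of_dvd_mul_left (by simp) (Dvd.intro _ hperf')
  obtain ⟨j, rfl⟩ := hdvd
  have hj : 0 < j := by
    rcases Nat.eq_zero_or_pos j with rfl | h
    · simp at hN
    · exact h
  have hsum : sigma (z * j) = z * j + j := by
    apply Nat.eq_of_mul_eq_mul_left (show 0 < z by omega)
    rw [hperf']; ring
  have hproper : ∑ d ∈ (z * j).properDivisors, d = j := by
    have h : sigma (z * j) = ∑ d ∈ (z * j).properDivisors, d + z * j :=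
      Nat.sum_divisors_eq_sum_properDivisors_add_self
    omega
  -- The proper divisors sum to the divisor `j`, which forces `j = 1`.
  rcases Nat.sum_properDivisors_dvd (n := z * j) (by rw [hproper]; exact Dvd.intro_left z rfl)
    with h | h
  · have hj1 : j = 1 := hproper.symm.trans h
    subst hj1
    refine ⟨k, z, hk, ?_, hz, by simp⟩
    rw [← Nat.sum_properDivisors_eq_one_iff_prime]
    simpa using h
  · rw [hproper] at h
    nlinarith

/-- If `n = m * D` has abundancy index `(σ(D) + 1) / D`, then the only divisors of `n` below `D`
are divisors of `D`: another one, `e`, would contribute the extra summand `n / e > m` to `σ(n)`. -/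
lemma dvd_of_dvd_of_lt {m D e : ℕ} (hm : 0 < m) (hD : 0 < D)
    (h : sigma (m * D) = m * (sigma D + 1)) (he : e ∣ m * D) (hlt : e < D) : e ∣ D := by
  by_contra hne
  obtain ⟨f, hf⟩ := he
  have hmD : 0 < m * D := Nat.mul_pos hm hD
  have hfm : m < f := by
    by_contra! hle
    nlinarith [Nat.mul_le_mul_left e hle, Nat.mul_lt_mul_of_pos_right hlt hm]
  have hnot : f ∉ D.divisors.image (m * ·) := by
    intro hmem
    obtain ⟨d, hd, rfl⟩ := Finset.mem_image.1 hmem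
    apply hne
    refine ⟨d, Nat.eq_of_mul_eq_mul_left hm ?_⟩
    rw [hf]; ring
  have hsub : insert f (D.divisors.image (m * ·)) ⊆ (m * D).divisors := by
    intro a ha
    rw [Nat.mem_divisors]
    refine ⟨?_, hmD.ne'⟩
    rcases Finset.mem_insert.1 ha with rfl | ha
    · exact Dvd.intro_left e hf.symm
    · obtain ⟨d, hd, rfl⟩ := Finset.mem_image.1 ha
      exact Nat.mul_dvd_mul_left m (Nat.dvd_of_mem_divisors hd)
  have hle : ∑ a ∈ insert f (D.divisors.image (m * ·)), a ≤ sigma (m * D) :=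
    Finset.sum_le_sum_of_subset hsub
  rw [Finset.sum_insert hnot,
    Finset.sum_image (fun a _ b _ hab => Nat.eq_of_mul_eq_mul_left hm hab),
    ← Finset.mul_sum, h] at hle
  unfold sigma at hle
  nlinarith

theorem even_perfect_outlaw (N : ℕ) (hN : 0 < N) (heven : Even N)
    (hperf : sigma N = 2 * N) :
    AbundancyOutlaw (((sigma (2 * N) : ℚ) + 1) / (2 * N)) := by
  constructor
  · have h : 2 * N ≤ sigma (2 * N) :=
      Finset.single_le_sum (f := fun d => d) (fun _ _ => Nat.zero_le _)
        (Nat.mem_divisors_self _ (by omega))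
    have hq : (2 * N : ℚ) ≤ sigma (2 * N) := by exact_mod_cast h
    have hpos : (0 : ℚ) < 2 * N := by positivity
    rw [one_lt_div hpos]
    linarith
  rintro ⟨n, hn, hI⟩
  obtain ⟨k, z, hk, hzp, hz, hNz⟩ := euler_even_perfect N hN heven hperf
  have hz3 : 3 ≤ z := by
    have : 2 ^ 2 ≤ 2 ^ (k + 1) := Nat.pow_le_pow_right (by norm_num) (by omega)
    omega
  have hodd : Odd z := hzp.odd_of_ne_two (by omega)
  have hx : sigma (z + 1) = 2 * z + 1 := by
    have h := sigma_two_pow (k + 1)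
    rw [pow_succ 2 (k + 1), ← hz] at h
    omega
  have hD : 2 * N = (z + 1) * z := by rw [hNz, hz]; ring
  have hsD : sigma (2 * N) = (2 * z + 1) * (z + 1) := by
    rw [hD, sigma_mul_of_coprime_s15 (by simp), hx, sigma_prime hzp]
  have key : sigma n * (2 * N) = (sigma (2 * N) + 1) * n := by
    unfold I at hI
    rw [div_eq_div_iff (by positivity) (by positivity)] at hI
    exact_mod_cast hI
  have hAx : (sigma (2 * N) + 1).Coprime (z + 1) := by
    rw [hsD]; simp
  have hAz : (sigma (2 * N) + 1).Coprime z := by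
    have : sigma (2 * N) + 1 = 2 + (2 * z + 3) * z := by rw [hsD]; ring
    rw [this, Nat.coprime_add_mul_right_left]
    exact Nat.coprime_two_left.2 hodd
  have hAe : (2 * z + 1).Coprime (sigma (2 * N) + 1) := by
    rw [hsD]; simp
  have hAD : (2 * N).Coprime (sigma (2 * N) + 1) := by
    conv_lhs => rw [hD]
    exact (hAx.mul_right hAz).symm
  obtain ⟨m, hm⟩ : 2 * N ∣ n := hAD.dvd_of_dvd_mul_left (Dvd.intro_left _ key)
  rw [mul_comm] at hm
  have hm0 : 0 < m := Nat.pos_of_mul_pos_right (hm ▸ hn)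
  have hsn : sigma (m * (2 * N)) = m * (sigma (2 * N) + 1) := by
    apply Nat.eq_of_mul_eq_mul_right (show 0 < 2 * N by omega)
    rw [← hm, key]
    conv_lhs => rw [hm]
    ring
  have small : ∀ e, e ∣ n → e < 2 * N → e ∣ 2 * N := fun e he hlt =>
    dvd_of_dvd_of_lt hm0 (by omega) hsn (hm ▸ he) hlt
  have hxn : z + 1 ∣ n := ⟨z * m, by rw [hm, hD]; ring⟩
  obtain ⟨b, hb⟩ := hxn
  rcases Nat.even_or_odd b with ⟨c, hc⟩ | hbodd
  · have h1 := small (2 * (z + 1)) ⟨c, by rw [hb, hc]; ring⟩ (by rw [hD]; nlinarith)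
    rw [hD, mul_comm 2] at h1
    have h2 : 2 ∣ z := Nat.dvd_of_mul_dvd_mul_left (by omega) h1
    obtain ⟨c, hc⟩ := hodd
    omega
  · have hcop : (z + 1).Coprime b := by
      rw [hz]; exact (Nat.coprime_two_left.2 hbodd).pow_left _
    have he : 2 * z + 1 ∣ n := by
      apply hAe.dvd_of_dvd_mul_left
      rw [← key]
      apply Dvd.dvd.mul_right
      rw [hb, sigma_mul_of_coprime_s15 hcop, hx]
      exact Dvd.intro _ rfl
    have h1 := small _ he (by rw [hD]; nlinarith)
    have hc : (2 * z + 1).Coprime ((z + 1) * z) := by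
      apply Nat.Coprime.mul_right
      · have : 2 * z + 1 = z + 1 * (z + 1) := by ring
        rw [this, Nat.coprime_add_mul_right_left]
        simp
      · simp
    have := Nat.eq_one_of_dvd_coprimes hc dvd_rfl (hD ▸ h1)
    omega
end

section
/- If there exists an integer n ≥ 5041 violating Robin's inequality, i.e., with I(n) ≥ e^γ · log(log n), then the least such integer n is a superabundant number. -/
/-! ### Bounding the divisor sum by pairing divisors -/

/-- The sum of `d + n / d` over the divisors `d ≤ k` of `n` with `d ^ 2 ≤ n`. If `n` is a square its
root is counted twice. Boolean tests keep kernel evaluation cheap. -/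
def pairSum (n : ℕ) : ℕ → ℕ
  | 0 => 0
  | k + 1 => bif Nat.beq (n % (k + 1)) 0 && Nat.ble ((k + 1) * (k + 1)) n then
      pairSum n k + ((k + 1) + n / (k + 1)) else pairSum n k

/-- Checks `b * pairSum n k ≤ a * n` for the `c` integers `n = s, …, s + c - 1`. -/
def checkRange (a b k s : ℕ) : ℕ → Bool
  | 0 => true
  | c + 1 => Nat.ble (b * pairSum (s + c) k) (a * (s + c)) && checkRange a b k s c

lemma pairSum_eq (n k : ℕ) : pairSum n k =
    ∑ d ∈ (Finset.Icc 1 k).filter (fun d => d ∣ n ∧ d * d ≤ n), (d + n / d) := by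
  induction k with
  | zero => simp [pairSum]
  | succ k ih =>
    rw [← Finset.insert_Icc_right_eq_Icc_add_one (by omega), Finset.filter_insert, pairSum, ih]
    by_cases h : (k + 1) ∣ n ∧ (k + 1) * (k + 1) ≤ n
    · have h1 : (Nat.beq (n % (k + 1)) 0 && Nat.ble ((k + 1) * (k + 1)) n) = true := by
        rw [Bool.and_eq_true, Nat.beq_eq, Nat.ble_eq]
        exact ⟨Nat.mod_eq_zero_of_dvd h.1, h.2⟩
      rw [if_pos h, Finset.sum_insert (by simp), h1, cond_true, add_comm]
    · have h1 : (Nat.beq (n % (k + 1)) 0 && Nat.ble ((k + 1) * (k + 1)) n) = false := by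
        rw [← Bool.not_eq_true, Bool.and_eq_true, Nat.beq_eq, Nat.ble_eq]
        exact fun h' => h ⟨Nat.dvd_of_mod_eq_zero h'.1, h'.2⟩
      rw [if_neg h, h1, cond_false]

/-- Every divisor of `n` either is at most `√n` or is `n / d` for such a divisor `d`. -/
lemma sigma_le_pairSum {n k : ℕ} (hn : 0 < n) (hk : n < (k + 1) * (k + 1)) :
    sigma n ≤ pairSum n k := by
  set S := (Finset.Icc 1 k).filter (fun d => d ∣ n ∧ d * d ≤ n) with hS
  have hmem : ∀ d, d ∣ n → d * d ≤ n → d ∈ S := by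
    intro d h1 h2
    rw [hS, Finset.mem_filter, Finset.mem_Icc]
    exact ⟨⟨Nat.pos_of_dvd_of_pos h1 hn, by by_contra hc; nlinarith⟩, h1, h2⟩
  have hsub : n.divisors ⊆ S ∪ S.image (fun d => n / d) := by
    intro d hd
    obtain ⟨e, rfl⟩ := Nat.dvd_of_mem_divisors hd
    have hd0 : 0 < d := Nat.pos_of_mul_pos_right hn
    have he0 : 0 < e := Nat.pos_of_mul_pos_left hn
    rw [Finset.mem_union, Finset.mem_image]
    rcases le_total d e with h | h
    · exact Or.inl (hmem d (dvd_mul_right d e) (Nat.mul_le_mul_left d h))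
    · exact Or.inr ⟨e, hmem e (dvd_mul_left e d) (Nat.mul_le_mul_right e h),
        Nat.mul_div_cancel d he0⟩
  have himg : ∑ d ∈ S.image (fun d => n / d), d ≤ ∑ d ∈ S, n / d :=
    Finset.sum_image_le_of_nonneg (f := fun d => d) (g := fun d => n / d) (fun _ _ => Nat.zero_le _)
  calc sigma n ≤ ∑ d ∈ S ∪ S.image (fun d => n / d), d := Finset.sum_le_sum_of_subset hsub
    _ ≤ ∑ d ∈ S, d + ∑ d ∈ S.image (fun d => n / d), d := by
      rw [← Finset.sum_union_inter]; exact Nat.le_add_right _ _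
    _ ≤ ∑ d ∈ S, d + ∑ d ∈ S, n / d := Nat.add_le_add_left himg _
    _ = pairSum n k := by rw [pairSum_eq, Finset.sum_add_distrib]

lemma le_of_checkRange {a b k s c : ℕ} (h : checkRange a b k s c = true) {n : ℕ} (h1 : s ≤ n)
    (h2 : n < s + c) : b * pairSum n k ≤ a * n := by
  induction c with
  | zero => omega
  | succ c ih =>
    rw [checkRange, Bool.and_eq_true, Nat.ble_eq] at h
    rcases Nat.lt_or_ge n (s + c) with h3 | h3
    · exact ih h.2 h3
    · obtain rfl : n = s + c := by omega
      exact h.1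

lemma abundancy_le_of_checkRange {a b k s c : ℕ} (h : checkRange a b k s c = true) (hb : 0 < b)
    {n : ℕ} (hn : 0 < n) (h1 : s ≤ n) (h2 : n < s + c) (hk : n < (k + 1) * (k + 1)) :
    I n ≤ (a : ℚ) / b := by
  have h3 : b * sigma n ≤ a * n :=
    (Nat.mul_le_mul_left b (sigma_le_pairSum hn hk)).trans (le_of_checkRange h h1 h2)
  have h4 : (b : ℚ) * sigma n ≤ a * n := by exact_mod_cast h3
  rw [I, div_le_div_iff₀ (by exact_mod_cast hn) (by exact_mod_cast hb)]
  linarith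

/-- The maximum `403 / 105 = I 5040` is attained at `5040`. -/
lemma abundancy_le_of_le_5040 {m : ℕ} (hm : 0 < m) (h : m ≤ 5040) : I m ≤ 403 / 105 := by
  have hc : checkRange 403 105 71 1 5040 = true := by decide +kernel
  simpa using abundancy_le_of_checkRange hc (by norm_num) hm hm (by omega) (by omega)

lemma abundancy_le_of_lt_7000 {n : ℕ} (h1 : 5041 ≤ n) (h2 : n < 7000) : I n ≤ 37 / 10 := by
  have hc : checkRange 37 10 83 5041 1959 = true := by decide +kernel
  simpa using
    abundancy_le_of_checkRange hc (by norm_num) (by omega) h1 (by omega) (by omega)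

/-! ### Numerical bounds for the right-hand side of Robin's inequality -/

lemma lt_log_of_pow_lt {x : ℝ} (hx : 0 < x) (p q : ℕ) (hq : 0 < q)
    (h : (2.7182818286 : ℝ) ^ p ≤ x ^ q) : (p : ℝ) / q ≤ Real.log x := by
  rw [div_le_iff₀ (by exact_mod_cast hq), mul_comm, ← Real.log_pow,
    Real.le_log_iff_exp_le (by positivity), ← mul_one (p : ℝ), Real.exp_nat_mul]
  exact (pow_le_pow_left₀ (Real.exp_pos 1).le Real.exp_one_lt_d9.le p).trans h

lemma lt_eulerMascheroni : (0.568 : ℝ) < Real.eulerMascheroniConstant := by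
  refine lt_trans ?_ (Real.eulerMascheroniSeq_lt_eulerMascheroniConstant 63)
  have h64 : Real.log 64 = 6 * Real.log 2 := by
    rw [show (64 : ℝ) = 2 ^ 6 by norm_num, Real.log_pow]; norm_num
  have hH : (4.7274 : ℚ) < harmonic 63 := by
    simp only [harmonic, Finset.sum_range_succ, Finset.sum_range_zero]; norm_num
  have hH' : (4.7274 : ℝ) < (harmonic 63 : ℝ) := by
    have := (Rat.cast_lt (K := ℝ)).2 hH
    norm_num at this ⊢
  have h2 := Real.log_two_lt_d9
  rw [Real.eulerMascheroniSeq, show ((63 : ℕ) : ℝ) + 1 = 64 by norm_num, h64]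
  linarith

lemma lt_exp_eulerMascheroni :
    (1.764 : ℝ) < Real.exp Real.eulerMascheroniConstant := by
  refine lt_trans ?_ (Real.exp_lt_exp.2 lt_eulerMascheroni)
  -- `0.568 = 71 / 125`, so the claim is `1.764 ^ 125 < e ^ 71`.
  refine lt_of_pow_lt_pow_left₀ 125 (Real.exp_pos _).le ?_
  rw [← Real.exp_nat_mul, show ((125 : ℕ) : ℝ) * 0.568 = (71 : ℕ) * 1 by norm_num,
    Real.exp_nat_mul]
  refine lt_trans ?_ (pow_lt_pow_left₀ Real.exp_one_gt_d9 (by norm_num) (by norm_num))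
  norm_num

/-- Monotonicity of `e ^ γ * log (log x)` in the range where `log x > 0`. -/
lemma robin_rhs_mono {x y : ℝ} (hx : 1 < x) (hxy : x ≤ y) :
    Real.exp Real.eulerMascheroniConstant * Real.log (Real.log x) ≤
      Real.exp Real.eulerMascheroniConstant * Real.log (Real.log y) :=
  mul_le_mul_of_nonneg_left
    (Real.log_le_log (Real.log_pos hx) (Real.log_le_log (by linarith) hxy)) (Real.exp_pos _).le

lemma robin_rhs_5041 : (37 / 10 : ℝ) <
    Real.exp Real.eulerMascheroniConstant * Real.log (Real.log 5041) := by
  have h1 := lt_log_of_pow_lt (x := 5041) (by norm_num) 17 2 (by norm_num) (by norm_num)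
  have h2 := lt_log_of_pow_lt (x := 17 / 2) (by norm_num) 213 100 (by norm_num) (by norm_num)
  push_cast at h1 h2
  have h3 := Real.log_le_log (by norm_num) h1
  nlinarith [lt_exp_eulerMascheroni]

lemma robin_rhs_7000 : (403 / 105 : ℝ) <
    Real.exp Real.eulerMascheroniConstant * Real.log (Real.log 7000) := by
  have h1 := lt_log_of_pow_lt (x := 7000) (by norm_num) 177 20 (by norm_num) (by norm_num)
  have h2 := lt_log_of_pow_lt (x := 177 / 20) (by norm_num) 109 50 (by norm_num) (by norm_num)
  push_cast at h1 h2
  have h3 := Real.log_le_log (by norm_num) h1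
  nlinarith [lt_exp_eulerMascheroni]

/-! ### The least counterexample -/

theorem least_robin_counterexample_superabundant
    (h : {n : ℕ | 5041 ≤ n ∧
        Real.exp Real.eulerMascheroniConstant * Real.log (Real.log n) ≤ (I n : ℝ)}.Nonempty) :
    ∀ m : ℕ, 0 < m →
      m < sInf {n : ℕ | 5041 ≤ n ∧
        Real.exp Real.eulerMascheroniConstant * Real.log (Real.log n) ≤ (I n : ℝ)} →
      I m < I (sInf {n : ℕ | 5041 ≤ n ∧
        Real.exp Real.eulerMascheroniConstant * Real.log (Real.log n) ≤ (I n : ℝ)}) := by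
  set S : Set ℕ := {n : ℕ | 5041 ≤ n ∧
    Real.exp Real.eulerMascheroniConstant * Real.log (Real.log n) ≤ (I n : ℝ)} with hS
  intro m hm hmN
  obtain ⟨hN1, hN2⟩ := Nat.sInf_mem h
  have hmS : m ∉ S := Nat.notMem_of_lt_sInf hmN
  generalize sInf S = N at *
  have key : (I m : ℝ) < I N := by
    refine lt_of_lt_of_le ?_ hN2
    rcases Nat.lt_or_ge m 5041 with hlt | hge
    · have hN3 : 7000 ≤ N := by
        by_contra! hc
        have h1 : (I N : ℝ) ≤ 37 / 10 := by
          simpa using (Rat.cast_le (K := ℝ)).2 (abundancy_le_of_lt_7000 hN1 hc)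
        have h2 := robin_rhs_mono (x := 5041) (y := N) (by norm_num) (by exact_mod_cast hN1)
        linarith [robin_rhs_5041]
      have h1 : (I m : ℝ) ≤ 403 / 105 := by
        simpa using (Rat.cast_le (K := ℝ)).2 (abundancy_le_of_le_5040 hm (by omega))
      have h2 := robin_rhs_mono (x := 7000) (y := N) (by norm_num) (by exact_mod_cast hN3)
      linarith [robin_rhs_7000]
    · have h1 : (I m : ℝ) <
          Real.exp Real.eulerMascheroniConstant * Real.log (Real.log m) := by
        by_contra! hc
        exact hmS ⟨hge, hc⟩
      exact h1.trans_le (robin_rhs_mono (by exact_mod_cast (by omega : 1 < m))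
        (by exact_mod_cast hmN.le))
  exact_mod_cast key
end
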